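/- arXiv:1910.02823 — 3 statements merged into one kernel-verified Lean document; each statement's English description precedes it below -/
import Mathlib

section
/- Let Y be a Hausdorff space with a strictly increasing closed cover {B_n}_{n∈ℕ}, and let X be a Hausdorff space. The following are equivalent: (a) X is metrizable; (b) to each closed set F ⊆ X one can assign a lower semi-continuous set-valued map φ_F : X → F(Y) satisfying (G) F = ⋂_{n∈ℕ} φ_F^{-1}[Y∖B_n] for every closed F, (m) F₁ ⊆ F₂ implies φ_{F₁}(x) ⊆ φ_{F₂}(x) for every x, (S) φ_{{x}}(y) = φ_{{y}}(x) for all x, y ∈ X, and (b_C(τ^c)) for every compact K and closed F with K ∩ F = ∅ there exists n ∈ ℕ with F ⊆ φ_K^#[B_n]; (c) there is such an assignment satisfying (G), (m), (S), and (b_{τ^c}(C)) for every closed F and compact K with F ∩ K = ∅ there exists n ∈ ℕ with K ⊆ φ_F^#[B_n]; (d) there is such an assignment satisfying (G), (m), (b_{τ^c}(C)), and (b_C(τ^c)). -/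
/-!
Write `U n F = {x | ¬ φ F x ⊆ B n}`. Lower semicontinuity makes these sets open, they decrease in `n`
and increase in `F`, and (G) says `⋂ n, U n F = F`. The theorem is thus about the neighbourhoods
`g n x = U n {x}`.

*Metrizable implies the rest.* One assignment serves for all three conditions: `φ F x` is the union
of `B 0` and all `B n` for which `x` lies in the `1 / (n + 1)`-thickening of `F` (`metricMap`). The
separation properties hold because disjoint closed and compact sets have disjoint thickenings.

*The converse.* Each of the three conditions implies that for disjoint `K` compact and `F` closed
some `n` satisfies `y ∉ g n x` and `x ∉ g n y` for all `x ∈ K`, `y ∈ F`; under symmetry either half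
gives the other. Applying this to `K = {p} ∪ {u n | n ≥ N}`, where `u n → p`, shows that
`v n ∈ g n (u n)` or `u n ∈ g n (v n)` for all `n` forces `v n → p` (`tendsto_of_linked`). Three
applications yield Frink's condition: for all `p` and `n` there is `m` such that every `g m q`
meeting `g m p` is contained in `g n p`.

Frink's condition implies metrizability (`metrizable_of_frink`): after passing to
`U k p = g (N p k) p` with indices `N p k` chosen recursively, whenever `U (k+1) p` and `U (k+1) q`
meet, both lie in `U k p` or both lie in `U k q`. Hence the sets `⋃ p, U k p × U k p` form a
countable base of a uniformity, which induces the given topology.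
-/

open Set Filter Topology TopologicalSpace

/-- A strictly increasing closed cover of `Y`. -/
def SICC {Y : Type*} [TopologicalSpace Y] (B : ℕ → Set Y) : Prop :=
  (∀ n, IsClosed (B n)) ∧ (⋃ n, B n) = Set.univ ∧ (B 0).Nonempty ∧ ∀ n, B n ⊂ B (n + 1)

/-- A lower semi-continuous set-valued map with nonempty closed values. -/
def LSCMap {X Y : Type*} [TopologicalSpace X] [TopologicalSpace Y] (φ : X → Set Y) : Prop :=
  (∀ x, (φ x).Nonempty ∧ IsClosed (φ x)) ∧
    ∀ V : Set Y, IsOpen V → IsOpen {x | (φ x ∩ V).Nonempty}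

/-! ### Frink's metrization theorem -/

/-- Frink's indices at a point with modulus `m`: the successor of an index `n` in this sequence is
the larger of `m n` and `n + 1`. -/
def frinkIndex (m : ℕ → ℕ) : ℕ → ℕ
  | 0 => 0
  | k + 1 => max (m (frinkIndex m k)) (frinkIndex m k + 1)

theorem frinkIndex_strictMono (m : ℕ → ℕ) : StrictMono (frinkIndex m) :=
  strictMono_nat_of_lt_succ fun k => by
    rw [frinkIndex]
    exact lt_of_lt_of_le (Nat.lt_succ_self _) (le_max_right _ _)

/-- Frink's metrization theorem for neighbourhoods `V n x` decreasing in `n`. -/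
theorem metrizable_of_frink {X : Type*} [TopologicalSpace X] [T0Space X] (V : ℕ → X → Set X)
    (hV : ∀ n x, V n x ∈ 𝓝 x) (anti : ∀ x, Antitone fun n => V n x)
    (base : ∀ p, ∀ W ∈ 𝓝 p, ∃ n, V n p ⊆ W)
    (frink : ∀ p n, ∃ m, ∀ q, (V m q ∩ V m p).Nonempty → V m q ⊆ V n p) :
    MetrizableSpace X := by
  choose m hm using frink
  let N : X → ℕ → ℕ := fun p => frinkIndex (m p)
  have hN : ∀ p, StrictMono (N p) := fun p => frinkIndex_strictMono (m p)
  have hNm : ∀ p k, m p (N p k) ≤ N p (k + 1) := fun p k => le_max_left _ _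
  let U : ℕ → X → Set X := fun k p => V (N p k) p
  have Uanti : ∀ p, Antitone fun k => U k p := fun p i j h => anti p ((hN p).monotone h)
  -- the point with the smaller index absorbs the neighbourhood of the other one
  have absorb : ∀ k p q, N p (k + 1) ≤ N q (k + 1) → (U (k + 1) q ∩ U (k + 1) p).Nonempty →
      U (k + 1) q ⊆ U k p := by
    intro k p q h ⟨z, hzq, hzp⟩
    have h1 := anti q ((hNm p k).trans h)
    exact h1.trans (hm p (N p k) q ⟨z, h1 hzq, anti p (hNm p k) hzp⟩)
  let W : ℕ → Set (X × X) := fun k => {a | ∃ p, a.1 ∈ U k p ∧ a.2 ∈ U k p}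
  have Wanti : Antitone W := fun i j h a ⟨p, h1, h2⟩ => ⟨p, Uanti p h h1, Uanti p h h2⟩
  have hW : (⨅ k, 𝓟 (W k)).HasBasis (fun _ => True) W :=
    hasBasis_iInf_principal (directed_of_isDirected_le Wanti)
  let u : UniformSpace X :=
    { uniformity := ⨅ k, 𝓟 (W k)
      symm := (hW.tendsto_iff hW).2 fun k _ => ⟨k, trivial, fun a ⟨p, h1, h2⟩ => ⟨p, h2, h1⟩⟩
      comp := by
        intro s hs
        obtain ⟨k, -, hk⟩ := hW.mem_iff.1 hs
        refine Filter.mem_of_superset (Filter.mem_lift' (hW.mem_of_mem (i := k + 1) trivial)) ?_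
        rintro ⟨a, c⟩ ⟨b, ⟨p, hap, hbp⟩, ⟨q, hbq, hcq⟩⟩
        apply hk
        rcases le_total (N p (k + 1)) (N q (k + 1)) with h | h
        · exact ⟨p, Uanti p k.le_succ hap, absorb k p q h ⟨b, hbq, hbp⟩ hcq⟩
        · exact ⟨q, absorb k q p h ⟨b, hbp, hbq⟩ hap, Uanti q k.le_succ hcq⟩
      nhds_eq_comap_uniformity := by
        intro p
        ext s
        rw [(hW.comap (Prod.mk p)).mem_iff]
        constructor
        · intro hs
          obtain ⟨n, hn⟩ := base p s hs
          -- the index `m p n` suffices, because `N r k ≥ k` for every `r`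
          refine ⟨m p n, trivial, ?_⟩
          rintro q ⟨r, hp, hq⟩
          have h1 := anti r ((hN r).id_le (m p n))
          exact hn (hm p n r ⟨p, h1 hp, mem_of_mem_nhds (hV _ p)⟩ (h1 hq))
        · rintro ⟨k, -, hk⟩
          exact Filter.mem_of_superset (hV (N p k) p) fun q hq =>
            hk ⟨p, mem_of_mem_nhds (hV _ p), hq⟩ }
  have : (uniformity X).IsCountablyGenerated :=
    HasCountableBasis.isCountablyGenerated ⟨hW, Set.to_countable _⟩
  exact UniformSpace.metrizableSpace

/-! ### Metrizability from separation of compact and closed sets -/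

/-- Separation of compact from closed sets by `g` transfers convergence along `g`-linked
sequences. -/
theorem tendsto_of_linked {X : Type*} [TopologicalSpace X] (g : ℕ → X → Set X)
    (anti : ∀ x, Antitone fun n => g n x)
    (sep : ∀ K F : Set X, IsCompact K → IsClosed F → Disjoint K F →
      ∃ n, ∀ x ∈ K, ∀ y ∈ F, y ∉ g n x ∧ x ∉ g n y)
    {u v : ℕ → X} {p : X} (hu : Tendsto u atTop (𝓝 p))
    (huv : ∀ n, v n ∈ g n (u n) ∨ u n ∈ g n (v n)) : Tendsto v atTop (𝓝 p) := by
  rw [tendsto_nhds]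
  intro W hWo hpW
  obtain ⟨N, hN⟩ := eventually_atTop.1 (hu.eventually (hWo.mem_nhds hpW))
  have hKW : insert p (range fun n => u (n + N)) ⊆ W := by
    rintro _ (rfl | ⟨n, rfl⟩)
    · exact hpW
    · exact hN _ (Nat.le_add_left _ _)
  obtain ⟨n₀, hn₀⟩ := sep _ Wᶜ ((tendsto_add_atTop_iff_nat N).2 hu).isCompact_insert_range
    hWo.isClosed_compl (disjoint_compl_right.mono_left hKW)
  filter_upwards [eventually_ge_atTop n₀, eventually_ge_atTop N] with n h0 h1
  by_contra hv
  have := hn₀ (u n) (Or.inr ⟨n - N, by simp [Nat.sub_add_cancel h1]⟩) (v n) hv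
  rcases huv n with h | h
  · exact this.1 (anti _ h0 h)
  · exact this.2 (anti _ h0 h)

theorem metrizable_of_separating {X : Type*} [TopologicalSpace X] [T0Space X]
    (g : ℕ → X → Set X) (hg : ∀ n x, g n x ∈ 𝓝 x) (anti : ∀ x, Antitone fun n => g n x)
    (sep : ∀ K F : Set X, IsCompact K → IsClosed F → Disjoint K F →
      ∃ n, ∀ x ∈ K, ∀ y ∈ F, y ∉ g n x ∧ x ∉ g n y) :
    MetrizableSpace X := by
  refine metrizable_of_frink g hg anti ?_ ?_
  · intro p W hW
    by_contra! h
    choose v hv hvW using fun n => not_subset.1 (h n)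
    have := tendsto_of_linked g anti sep (tendsto_const_nhds (x := p)) fun n => Or.inl (hv n)
    obtain ⟨n, hn⟩ := (this.eventually hW).exists
    exact hvW n hn
  · intro p n
    by_contra! h
    choose q hq hqn using h
    choose z hzq hzp using hq
    choose y hy hyn using fun k => not_subset.1 (hqn k)
    have hz := tendsto_of_linked g anti sep (tendsto_const_nhds (x := p)) fun k => Or.inl (hzp k)
    have hq := tendsto_of_linked g anti sep hz fun k => Or.inr (hzq k)
    have hy' := tendsto_of_linked g anti sep hq fun k => Or.inl (hy k)
    obtain ⟨k, hk⟩ := (hy'.eventually (hg n p)).exists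
    exact hyn k hk

/-! ### The assignment on a metric space -/

/-- The assignment given by a metric: the union of `B 0` and of those `B n` for which `x` is at
distance less than `1 / (n + 1)` from `F`. Including `B 0` keeps the values nonempty. -/
def metricMap {X Y : Type*} [MetricSpace X] (B : ℕ → Set Y) (F : Set X) (x : X) : Set Y :=
  {y | y ∈ B 0 ∨ ∃ n : ℕ, x ∈ Metric.thickening (1 / ((n : ℝ) + 1)) F ∧ y ∈ B n}

theorem metricMap_mono {X Y : Type*} [MetricSpace X] (B : ℕ → Set Y) {F₁ F₂ : Set X}
    (h : F₁ ⊆ F₂) (x : X) :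
    metricMap B F₁ x ⊆ metricMap B F₂ x := by
  rintro y (hy | ⟨n, hx, hy⟩)
  · exact Or.inl hy
  · exact Or.inr ⟨n, Metric.thickening_subset_of_subset _ h hx, hy⟩

theorem metricMap_symm {X Y : Type*} [MetricSpace X] (B : ℕ → Set Y) (x y : X) :
    metricMap B {x} y = metricMap B {y} x := by
  simp only [metricMap, Metric.thickening_singleton, Metric.mem_ball, dist_comm]

theorem SICC.monotone {Y : Type*} [TopologicalSpace Y] {B : ℕ → Set Y} (hB : SICC B) :
    Monotone B :=
  monotone_nat_of_le_succ fun n => (hB.2.2.2 n).subset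

theorem thickening_inv_anti {X : Type*} [MetricSpace X] (F : Set X) {k n : ℕ} (h : k ≤ n) :
    Metric.thickening (1 / ((n : ℝ) + 1)) F ⊆ Metric.thickening (1 / ((k : ℝ) + 1)) F :=
  Metric.thickening_mono (Nat.one_div_le_one_div h) F

section Metric

variable {X Y : Type*} [MetricSpace X] [TopologicalSpace Y] {B : ℕ → Set Y}

theorem metricMap_subset (hB : SICC B) {F : Set X} {x : X} {k : ℕ}
    (h : x ∉ Metric.thickening (1 / ((k : ℝ) + 1)) F) : metricMap B F x ⊆ B k := by
  rintro y (hy | ⟨n, hx, hy⟩)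
  · exact hB.monotone k.zero_le hy
  · rcases le_total n k with hn | hn
    · exact hB.monotone hn hy
    · exact absurd (thickening_inv_anti F hn hx) h

theorem metricMap_eq_univ (hB : SICC B) {F : Set X} {x : X} (h : x ∈ F) :
    metricMap B F x = univ := by
  refine eq_univ_of_forall fun y => ?_
  obtain ⟨n, hn⟩ := mem_iUnion.1 (hB.2.1.symm ▸ mem_univ y : y ∈ ⋃ n, B n)
  exact Or.inr ⟨n, Metric.self_subset_thickening Nat.one_div_pos_of_nat F h, hn⟩

theorem disjoint_thickening {K F : Set X} (hK : IsCompact K) (hF : IsClosed F)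
    (h : Disjoint K F) : ∃ n : ℕ, Disjoint (Metric.thickening (1 / ((n : ℝ) + 1)) K)
      (Metric.thickening (1 / ((n : ℝ) + 1)) F) := by
  obtain ⟨δ, hδ, hd⟩ := h.exists_thickenings hK hF
  obtain ⟨n, hn⟩ := exists_nat_one_div_lt hδ
  exact ⟨n, hd.mono (Metric.thickening_mono hn.le _) (Metric.thickening_mono hn.le _)⟩

theorem exists_notMem_thickening {F : Set X} (hF : IsClosed F) {x : X} (h : x ∉ F) :
    ∃ n : ℕ, x ∉ Metric.thickening (1 / ((n : ℝ) + 1)) F := by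
  obtain ⟨n, hn⟩ := disjoint_thickening isCompact_singleton hF (disjoint_singleton_left.2 h)
  exact ⟨n, fun hx =>
    hn.le_bot ⟨Metric.self_subset_thickening Nat.one_div_pos_of_nat _ rfl, hx⟩⟩

theorem metricMap_lsc (hB : SICC B) {F : Set X} (hF : IsClosed F) :
    LSCMap (metricMap B F) := by
  refine ⟨fun x => ⟨hB.2.2.1.mono fun y hy => Or.inl hy, ?_⟩, fun V _ => ?_⟩
  · by_cases hx : x ∈ F
    · rw [metricMap_eq_univ hB hx]
      exact isClosed_univ
    · -- off `F` only finitely many `B n` contribute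
      obtain ⟨k, hk⟩ := exists_notMem_thickening hF hx
      have hfin : {n : ℕ | x ∈ Metric.thickening (1 / ((n : ℝ) + 1)) F}.Finite :=
        (finite_lt_nat k).subset fun n hn =>
          lt_of_not_ge fun h => hk (thickening_inv_anti F h hn)
      have : metricMap B F x =
          B 0 ∪ ⋃ n ∈ {n : ℕ | x ∈ Metric.thickening (1 / ((n : ℝ) + 1)) F}, B n := by
        ext y
        simp [metricMap]
      rw [this]
      exact (hB.1 0).union (hfin.isClosed_biUnion fun n _ => hB.1 n)
  · have : {x | (metricMap B F x ∩ V).Nonempty} = {_x | (B 0 ∩ V).Nonempty} ∪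
        ⋃ n : ℕ, ⋃ _ : (B n ∩ V).Nonempty, Metric.thickening (1 / ((n : ℝ) + 1)) F := by
      ext x
      simp only [metricMap, Set.Nonempty, mem_inter_iff, mem_ofPred_eq, mem_union, mem_iUnion]
      grind
    rw [this]
    exact isOpen_const.union
      (isOpen_iUnion fun n => isOpen_iUnion fun _ => Metric.isOpen_thickening)

theorem metricMap_inter (hB : SICC B) {F : Set X} (hF : IsClosed F) :
    F = ⋂ n, {x | (metricMap B F x ∩ (B n)ᶜ).Nonempty} := by
  ext x
  simp only [mem_iInter, mem_ofPred_eq]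
  constructor
  · intro hx n
    obtain ⟨y, -, hy⟩ := exists_of_ssubset (hB.2.2.2 n)
    exact ⟨y, metricMap_eq_univ hB hx ▸ mem_univ y, hy⟩
  · intro h
    by_contra hx
    obtain ⟨k, hk⟩ := exists_notMem_thickening hF hx
    obtain ⟨y, hy, hyk⟩ := h k
    exact hyk (metricMap_subset hB hk hy)

theorem metricMap_separates (hB : SICC B) {K F : Set X} (hK : IsCompact K)
    (hF : IsClosed F) (h : Disjoint K F) :
    (∃ n : ℕ, F ⊆ {x | metricMap B K x ⊆ B n}) ∧ ∃ n : ℕ, K ⊆ {x | metricMap B F x ⊆ B n} := by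
  obtain ⟨n, hn⟩ := disjoint_thickening hK hF h
  have hpos : 0 < 1 / ((n : ℝ) + 1) := Nat.one_div_pos_of_nat
  exact ⟨⟨n, fun x hx => metricMap_subset hB fun hx' =>
      hn.le_bot ⟨hx', Metric.self_subset_thickening hpos F hx⟩⟩,
    ⟨n, fun x hx => metricMap_subset hB fun hx' =>
      hn.le_bot ⟨Metric.self_subset_thickening hpos K hx, hx'⟩⟩⟩

end Metric

/-! ### The equivalence -/

/-- The common part of the three converse implications: an assignment satisfying (G) and
the two-sided separation property for its values at singletons. -/
theorem metrizable_of_assignment {X Y : Type*} [TopologicalSpace X] [T2Space X]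
    [TopologicalSpace Y] {B : ℕ → Set Y} (hB : SICC B) (φ : Set X → X → Set Y)
    (lsc : ∀ F : Set X, IsClosed F → LSCMap (φ F))
    (G : ∀ F : Set X, IsClosed F → F = ⋂ n, {x | (φ F x ∩ (B n)ᶜ).Nonempty})
    (sep : ∀ K F : Set X, IsCompact K → IsClosed F → K ∩ F = ∅ →
      ∃ n, ∀ x ∈ K, ∀ y ∈ F, φ {x} y ⊆ B n ∧ φ {y} x ⊆ B n) :
    MetrizableSpace X := by
  refine metrizable_of_separating (fun n x => {y | (φ {x} y ∩ (B n)ᶜ).Nonempty}) ?_ ?_ ?_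
  · intro n x
    refine ((lsc {x} isClosed_singleton).2 _ (hB.1 n).isOpen_compl).mem_nhds ?_
    have : x ∈ ({x} : Set X) := rfl
    rw [G {x} isClosed_singleton] at this
    exact mem_iInter.1 this n
  · intro x i j hij y ⟨z, hz, hzj⟩
    exact ⟨z, hz, fun h => hzj (hB.monotone hij h)⟩
  · intro K F hK hF h
    obtain ⟨n, hn⟩ := sep K F hK hF h.inter_eq
    exact ⟨n, fun x hx y hy => ⟨fun ⟨_, h1, h2⟩ => h2 ((hn x hx y hy).1 h1),
      fun ⟨_, h1, h2⟩ => h2 ((hn x hx y hy).2 h1)⟩⟩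

theorem statement15 {X Y : Type*} [TopologicalSpace X] [T2Space X]
    [TopologicalSpace Y] [T2Space Y] (B : ℕ → Set Y) (hB : SICC B) :
    List.TFAE
      [MetrizableSpace X,
       ∃ φ : Set X → X → Set Y,
        (∀ F : Set X, IsClosed F → LSCMap (φ F)) ∧
        (∀ F : Set X, IsClosed F → F = ⋂ n, {x | (φ F x ∩ (B n)ᶜ).Nonempty}) ∧
        (∀ F₁ F₂ : Set X, IsClosed F₁ → IsClosed F₂ → F₁ ⊆ F₂ →
          ∀ x, φ F₁ x ⊆ φ F₂ x) ∧
        (∀ x y : X, φ ({x} : Set X) y = φ ({y} : Set X) x) ∧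
        (∀ (K F : Set X), IsCompact K → IsClosed F → K ∩ F = ∅ →
          ∃ n : ℕ, F ⊆ {x | φ K x ⊆ B n}),
       ∃ φ : Set X → X → Set Y,
        (∀ F : Set X, IsClosed F → LSCMap (φ F)) ∧
        (∀ F : Set X, IsClosed F → F = ⋂ n, {x | (φ F x ∩ (B n)ᶜ).Nonempty}) ∧
        (∀ F₁ F₂ : Set X, IsClosed F₁ → IsClosed F₂ → F₁ ⊆ F₂ →
          ∀ x, φ F₁ x ⊆ φ F₂ x) ∧
        (∀ x y : X, φ ({x} : Set X) y = φ ({y} : Set X) x) ∧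
        (∀ (F K : Set X), IsClosed F → IsCompact K → F ∩ K = ∅ →
          ∃ n : ℕ, K ⊆ {x | φ F x ⊆ B n}),
       ∃ φ : Set X → X → Set Y,
        (∀ F : Set X, IsClosed F → LSCMap (φ F)) ∧
        (∀ F : Set X, IsClosed F → F = ⋂ n, {x | (φ F x ∩ (B n)ᶜ).Nonempty}) ∧
        (∀ F₁ F₂ : Set X, IsClosed F₁ → IsClosed F₂ → F₁ ⊆ F₂ →
          ∀ x, φ F₁ x ⊆ φ F₂ x) ∧
        (∀ (F K : Set X), IsClosed F → IsCompact K → F ∩ K = ∅ →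
          ∃ n : ℕ, K ⊆ {x | φ F x ⊆ B n}) ∧
        (∀ (K F : Set X), IsCompact K → IsClosed F → K ∩ F = ∅ →
          ∃ n : ℕ, F ⊆ {x | φ K x ⊆ B n})] := by
  -- typeclass search for `T1Space X` is slow, so the instance is provided once
  have : T1Space X := T2Space.t1Space
  tfae_have 1 → 2 := fun h => by
    let _ := metrizableSpaceMetric X
    exact ⟨metricMap B, fun F => metricMap_lsc hB, fun F => metricMap_inter hB,
      fun F₁ F₂ _ _ => metricMap_mono B, metricMap_symm B,
      fun K F hK hF h => (metricMap_separates hB hK hF (disjoint_iff_inter_eq_empty.2 h)).1⟩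
  tfae_have 1 → 3 := fun h => by
    let _ := metrizableSpaceMetric X
    exact ⟨metricMap B, fun F => metricMap_lsc hB, fun F => metricMap_inter hB,
      fun F₁ F₂ _ _ => metricMap_mono B, metricMap_symm B,
      fun F K hF hK h =>
        (metricMap_separates hB hK hF (disjoint_iff_inter_eq_empty.2 h).symm).2⟩
  tfae_have 1 → 4 := fun h => by
    let _ := metrizableSpaceMetric X
    exact ⟨metricMap B, fun F => metricMap_lsc hB, fun F => metricMap_inter hB,
      fun F₁ F₂ _ _ => metricMap_mono B,
      fun F K hF hK h =>
        (metricMap_separates hB hK hF (disjoint_iff_inter_eq_empty.2 h).symm).2,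
      fun K F hK hF h => (metricMap_separates hB hK hF (disjoint_iff_inter_eq_empty.2 h)).1⟩
  tfae_have 2 → 1 := by
    rintro ⟨φ, lsc, G, mono, symm, sep⟩
    refine metrizable_of_assignment hB φ lsc G fun K F hK hF h => ?_
    obtain ⟨n, hn⟩ := sep K F hK hF h
    refine ⟨n, fun x hx y hy => ?_⟩
    have := (mono _ _ isClosed_singleton hK.isClosed (singleton_subset_iff.2 hx) y).trans (hn hy)
    exact ⟨this, symm x y ▸ this⟩
  tfae_have 3 → 1 := by
    rintro ⟨φ, lsc, G, mono, symm, sep⟩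
    refine metrizable_of_assignment hB φ lsc G fun K F hK hF h => ?_
    obtain ⟨n, hn⟩ := sep F K hF hK (inter_comm F K ▸ h)
    refine ⟨n, fun x hx y hy => ?_⟩
    have := (mono _ _ isClosed_singleton hF (singleton_subset_iff.2 hy) x).trans (hn hx)
    exact ⟨symm x y ▸ this, this⟩
  tfae_have 4 → 1 := by
    rintro ⟨φ, lsc, G, mono, sep, sep'⟩
    refine metrizable_of_assignment hB φ lsc G fun K F hK hF h => ?_
    obtain ⟨n, hn⟩ := sep F K hF hK (inter_comm F K ▸ h)
    obtain ⟨n', hn'⟩ := sep' K F hK hF h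
    refine ⟨max n n', fun x hx y hy => ⟨?_, ?_⟩⟩
    · exact ((mono _ _ isClosed_singleton hK.isClosed (singleton_subset_iff.2 hx) y).trans
        (hn' hy)).trans (hB.monotone (le_max_right _ _))
    · exact ((mono _ _ isClosed_singleton hF (singleton_subset_iff.2 hy) x).trans
        (hn hx)).trans (hB.monotone (le_max_left _ _))
  tfae_finish
end

section
/- Let X be a topological space and let φ : X → F(ℝ̄) be a lower semi-continuous set-valued map with values in the nonempty closed subsets of the extended real line ℝ̄ = ℝ ∪ {-∞, +∞}. Then the function f : X → ℝ̄ defined by f(x) = sup(φ(x) ∖ {+∞}) is lower semi-continuous. -/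
open Set Filter Topology TopologicalSpace

theorem statement16 {X : Type*} [TopologicalSpace X]
    (φ : X → Set EReal) (hφ : LSCMap φ) :
    ∀ r : ℝ, IsOpen {x | (r : EReal) < sSup (φ x \ {(⊤ : EReal)})} := by
  intro r
  -- Removing `⊤` from the values amounts to testing them against the open set `Ioo r ⊤`.
  convert hφ.2 (Ioo (r : EReal) ⊤) isOpen_Ioo using 3 with x
  rw [lt_sSup_iff]
  constructor
  · rintro ⟨y, ⟨hy, hne⟩, hr⟩
    exact ⟨y, hy, hr, lt_top_iff_ne_top.2 hne⟩
  · rintro ⟨y, hy, hr, ht⟩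
    exact ⟨y, ⟨hy, ht.ne⟩, hr⟩
end

section
/- A Hausdorff space X is stratifiable if and only if to each closed set F ⊆ X one can assign a lower semi-continuous function f_F : X → ℝ̄ such that: (1) F = f_F^{-1}(+∞); (2) if F₁ ⊆ F₂ are closed, then f_{F₁}(x) ≤ f_{F₂}(x) for every x ∈ X; and (3) for every closed F and every x ∉ F, there exist an open neighborhood V of x and m ∈ ℕ such that f_F(y) ≤ m for every y ∈ V. -/
/-!
A stratification and a monotone family of lower semi-continuous functions determine each other
through superlevel sets. Given `ρ`, the function of `F` counts how long a point stays in the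
decreasing open sets `⋂ k ≤ n, ρ k F`; a point off `F` leaves some `closure (ρ n F)`, which bounds
the function by `n` on an open neighbourhood. Given `f`, the sets `{x | n < f F x}` form a
stratification, since a local bound `m` on `f F` near `x` keeps `x` out of the closure of the
`m`-th one.
-/

open Set Filter Topology TopologicalSpace

/-- `X` is stratifiable. -/
def Stratifiable (X : Type*) [TopologicalSpace X] : Prop :=
  ∃ ρ : ℕ → Set X → Set X,
    (∀ (n : ℕ) (F : Set X), IsClosed F → IsOpen (ρ n F)) ∧
    (∀ F : Set X, IsClosed F → F = ⋂ n, ρ n F) ∧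
    (∀ F : Set X, IsClosed F → F = ⋂ n, closure (ρ n F)) ∧
    ∀ (n : ℕ) (F H : Set X), IsClosed F → IsClosed H → F ⊆ H → ρ n F ⊆ ρ n H

/-- The height of `x` over `F`: the supremum of those `n` such that `x ∈ ρ k F` for all `k ≤ n`.
It is `⊥` when there is no such `n`. -/
noncomputable def stratHeight {X : Type*} (ρ : ℕ → Set X → Set X) (F : Set X) (x : X) : EReal :=
  ⨆ (n : ℕ) (_ : ∀ k ≤ n, x ∈ ρ k F), ((n : ℝ) : EReal)

theorem lt_stratHeight_iff {X : Type*} {ρ : ℕ → Set X → Set X} {F : Set X} {x : X} {a : EReal} :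
    a < stratHeight ρ F x ↔ ∃ n : ℕ, (∀ k ≤ n, x ∈ ρ k F) ∧ a < ((n : ℝ) : EReal) := by
  simp only [stratHeight, lt_iSup_iff, exists_prop]

theorem stratHeight_le_of_notMem {X : Type*} {ρ : ℕ → Set X → Set X} {F : Set X} {x : X} {n : ℕ}
    (hx : x ∉ ρ n F) : stratHeight ρ F x ≤ ((n : ℝ) : EReal) := by
  refine iSup₂_le fun k hk => ?_
  have hkn : k ≤ n := by
    by_contra! h
    exact hx (hk n h.le)
  exact_mod_cast hkn

theorem stratHeight_eq_top {X : Type*} {ρ : ℕ → Set X → Set X} {F : Set X} {x : X}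
    (hx : ∀ n, x ∈ ρ n F) : stratHeight ρ F x = ⊤ := by
  rw [EReal.eq_top_iff_forall_lt]
  intro r
  obtain ⟨n, hn⟩ := exists_nat_gt r
  exact lt_stratHeight_iff.2 ⟨n, fun k _ => hx k, by exact_mod_cast hn⟩

theorem statement18 {X : Type*} [TopologicalSpace X] [T2Space X] :
    Stratifiable X ↔
      ∃ f : Set X → X → EReal,
        (∀ F : Set X, IsClosed F → ∀ r : ℝ, IsOpen {x | (r : EReal) < f F x}) ∧
        (∀ F : Set X, IsClosed F → F = {x | f F x = ⊤}) ∧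
        (∀ F₁ F₂ : Set X, IsClosed F₁ → IsClosed F₂ → F₁ ⊆ F₂ →
          ∀ x, f F₁ x ≤ f F₂ x) ∧
        (∀ F : Set X, IsClosed F → ∀ x ∉ F,
          ∃ V : Set X, IsOpen V ∧ x ∈ V ∧
            ∃ m : ℕ, ∀ y ∈ V, f F y ≤ ((m : ℝ) : EReal)) := by
  constructor
  · rintro ⟨ρ, hopen, hF, hcl, hmono⟩
    have hbdd : ∀ F : Set X, IsClosed F → ∀ x ∉ F, ∃ V : Set X, IsOpen V ∧ x ∈ V ∧
        ∃ m : ℕ, ∀ y ∈ V, stratHeight ρ F y ≤ ((m : ℝ) : EReal) := by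
      intro F hFc x hx
      rw [hcl F hFc, mem_iInter, not_forall] at hx
      obtain ⟨n, hn⟩ := hx
      exact ⟨(closure (ρ n F))ᶜ, isClosed_closure.isOpen_compl, hn, n, fun y hy =>
        stratHeight_le_of_notMem fun h => hy (subset_closure h)⟩
    refine ⟨stratHeight ρ, fun F hFc r => ?_, fun F hFc => ?_, fun F₁ F₂ h₁ h₂ h x => ?_, hbdd⟩
    · have : {x | (r : EReal) < stratHeight ρ F x} =
          ⋃ (n : ℕ) (_ : (r : EReal) < ((n : ℝ) : EReal)), ⋂ k ∈ Set.Iic n, ρ k F := by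
        ext x
        simp only [mem_ofPred_eq, lt_stratHeight_iff, mem_iUnion, mem_iInter, Set.mem_Iic,
          exists_prop]
        exact exists_congr fun n => and_comm
      rw [this]
      exact isOpen_iUnion fun n => isOpen_iUnion fun _ =>
        (Set.finite_Iic n).isOpen_biInter fun k _ => hopen k F hFc
    · ext x
      refine ⟨fun hx => stratHeight_eq_top fun n => ?_, fun hx => ?_⟩
      · rw [hF F hFc] at hx
        exact mem_iInter.1 hx n
      · by_contra hxF
        obtain ⟨V, -, hxV, m, hm⟩ := hbdd F hFc x hxF
        exact (((hm x hxV).trans_lt (EReal.coe_lt_top _)).ne) hx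
    · exact iSup_mono fun n => iSup_mono' fun hn =>
        ⟨fun k hk => hmono k F₁ F₂ h₁ h₂ h (hn k hk), le_rfl⟩
  · rintro ⟨f, hlsc, htop, hmono, hbdd⟩
    have hsub : ∀ F : Set X, IsClosed F → ∀ n : ℕ, F ⊆ {x | ((n : ℝ) : EReal) < f F x} := by
      intro F hFc n x hx
      rw [htop F hFc] at hx
      have hx' : f F x = ⊤ := hx
      simp only [mem_ofPred_eq, hx', EReal.coe_lt_top]
    have hcl : ∀ F : Set X, IsClosed F →
        ⋂ n : ℕ, closure {x | ((n : ℝ) : EReal) < f F x} ⊆ F := by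
      intro F hFc x hx
      by_contra hxF
      obtain ⟨V, hV, hxV, m, hm⟩ := hbdd F hFc x hxF
      obtain ⟨y, hyV, hy⟩ := mem_closure_iff.1 (mem_iInter.1 hx m) V hV hxV
      exact (hm y hyV).not_gt hy
    refine ⟨fun n F => {x | ((n : ℝ) : EReal) < f F x}, fun n F hFc => hlsc F hFc n,
      fun F hFc => ?_, fun F hFc => ?_, fun n F H hFc hHc h x hx => ?_⟩
    · exact (subset_iInter (hsub F hFc)).antisymm
        ((iInter_mono fun n => subset_closure).trans (hcl F hFc))
    · exact (subset_iInter fun n => (hsub F hFc n).trans subset_closure).antisymm (hcl F hFc)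
    · exact lt_of_lt_of_le hx (hmono F H hFc hHc h x)
end
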